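/- There exists K such that the following holds for every integer k ≥ K and every integer s with (s : ℝ) ≥ 2^{(k+9)/2}: letting ℱ₂⁴ denote the family of all clusters of transversals of Fin k × Fin s, one has ∑_{F ∈ ℱ₂⁴} 2^{−|F|} ≤ k³ · C(k,3) · s^{4k−9} · 2^{−4·C(k,2) + 9}. -/

import Mathlib

/-- A transversal of `Fin k × Fin s`: a finite set containing exactly one
vertex from each class `V_i = {i} × Fin s`. -/
def IsTransversal {k s : ℕ} (S : Finset (Fin k × Fin s)) : Prop :=
  ∀ i : Fin k, (S.filter (fun v => v.1 = i)).card = 1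

/-- The edge set of a transversal: all 2-element subsets of `S`. -/
def edgeSet {k s : ℕ} (S : Finset (Fin k × Fin s)) : Finset (Finset (Fin k × Fin s)) :=
  S.powersetCard 2

/-- `F` is a cluster: it is the union of the edge sets of four pairwise
distinct transversals whose edge sets share at least two elements. -/
def IsCluster {k s : ℕ} (F : Finset (Finset (Fin k × Fin s))) : Prop :=
  ∃ S₁ S₂ S₃ S₄ : Finset (Fin k × Fin s),
    IsTransversal S₁ ∧ IsTransversal S₂ ∧ IsTransversal S₃ ∧ IsTransversal S₄ ∧
    S₁ ≠ S₂ ∧ S₁ ≠ S₃ ∧ S₁ ≠ S₄ ∧ S₂ ≠ S₃ ∧ S₂ ≠ S₄ ∧ S₃ ≠ S₄ ∧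
    2 ≤ (edgeSet S₁ ∩ edgeSet S₂ ∩ edgeSet S₃ ∩ edgeSet S₄).card ∧
    F = edgeSet S₁ ∪ edgeSet S₂ ∪ edgeSet S₃ ∪ edgeSet S₄

/-!
Write each transversal as the graph of a function `Fin k → Fin s`. Two common edges force the
four functions to agree on a common set `A` of three classes. Build a cluster one transversal at
a time: if the new function agrees with some earlier one in exactly `a` classes, the transversal
contributes at least `C(k,2) - C(a,2)` new edges, so the potential is multiplied by at most
`2^{-C(k,2)} * 2^{C(a,2)}`. Among the functions prescribed on `A`, at most
`C(k-3,n) 3^n s^{k-3-n}` have `n` further agreements, and `s` is so large that, for each `n`,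
weighting these functions by `2^{C(n+3,2)}` gives a total of at most `2^{C(3,2)} s^{k-3}`. Hence
each of the three extension steps costs a factor of at most `2^{-C(k,2)} * 8 k s^{k-3}`, and
there are `C(k,3) s^k` choices of `A` and of the first transversal.
-/

section Transversals

open Finset

variable {ι α : Type*} [Fintype ι] [DecidableEq ι] [DecidableEq α]

/-- The graph of `f` as a finite set of vertices: the transversal `S_f` of the classes
`{i} × α`. -/
def transversalOf (f : ι → α) : Finset (ι × α) :=
  univ.image fun i => (i, f i)

/-- The union of the edge sets of the transversals `S_f`, `f ∈ P`; clusters are the sets of this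
form with `P` made of four functions. -/
def edgeUnion (P : Finset (ι → α)) : Finset (Finset (ι × α)) :=
  P.biUnion fun f => (transversalOf f).powersetCard 2

/-- The coordinates at which `f` agrees with at least one member of `P`. -/
def agreementSet (P : Finset (ι → α)) (f : ι → α) : Finset ι :=
  {i | ∃ g ∈ P, f i = g i}

/-- The functions that coincide with `g` on `A`. -/
def agreeingOn [Fintype α] (A : Finset ι) (g : ι → α) : Finset (ι → α) :=
  {f | ∀ i ∈ A, f i = g i}

/-- The weight `2^{-|F|}` of a finite set, as a real power. -/
noncomputable def potential {β : Type*} (F : Finset β) : ℝ :=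
  (2 : ℝ) ^ (-(#F : ℝ))

lemma potential_nonneg {β : Type*} (F : Finset β) : 0 ≤ potential F :=
  Real.rpow_nonneg zero_le_two _

lemma mem_transversalOf {f : ι → α} {v : ι × α} : v ∈ transversalOf f ↔ f v.1 = v.2 := by
  simp only [transversalOf, mem_image, mem_univ, true_and]
  exact ⟨by rintro ⟨i, rfl⟩; rfl, fun h => ⟨v.1, Prod.ext rfl h⟩⟩

lemma injOn_fst_transversalOf (f : ι → α) :
    Set.InjOn Prod.fst (transversalOf f : Set (ι × α)) := fun v hv w hw hvw =>
  Prod.ext hvw <| by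
    rw [← mem_transversalOf.1 (mem_coe.1 hv), ← mem_transversalOf.1 (mem_coe.1 hw), hvw]

lemma card_transversalOf (f : ι → α) : #(transversalOf f) = Fintype.card ι :=
  card_image_of_injective _ fun _ _ h => congrArg Prod.fst h

lemma exists_eq_transversalOf {k s : ℕ} {S : Finset (Fin k × Fin s)} (hS : IsTransversal S) :
    ∃ f, S = transversalOf f := by
  choose v hv using fun i => card_eq_one.1 (hS i)
  have v_mem (i : Fin k) : v i ∈ S ∧ (v i).1 = i :=
    mem_filter.1 <| hv i ▸ mem_singleton_self (v i)
  refine ⟨fun i => (v i).2, ext fun w => ?_⟩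
  rw [mem_transversalOf]
  constructor
  · intro hw
    have : w ∈ ({v w.1} : Finset _) := hv w.1 ▸ mem_filter.2 ⟨hw, rfl⟩
    exact congrArg Prod.snd (mem_singleton.1 this).symm
  · intro hw
    rw [show w = v w.1 from Prod.ext (v_mem w.1).2.symm hw.symm]
    exact (v_mem w.1).1

lemma card_transversalOf_inter_le (P : Finset (ι → α)) (f : ι → α) :
    #(P.biUnion transversalOf ∩ transversalOf f) ≤ #(agreementSet P f) := by
  refine card_le_card_of_injOn Prod.fst (fun v hv => ?_)
    ((injOn_fst_transversalOf f).mono (coe_subset.2 inter_subset_right))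
  obtain ⟨hvP, hvf⟩ := mem_inter.1 (mem_coe.1 hv)
  obtain ⟨g, hg, hvg⟩ := mem_biUnion.1 hvP
  simp only [agreementSet, coe_filter, mem_univ, true_and, Set.mem_ofPred_eq]
  exact ⟨g, hg, (mem_transversalOf.1 hvf).trans (mem_transversalOf.1 hvg).symm⟩

lemma card_edgeUnion_inter_le (P : Finset (ι → α)) (f : ι → α) :
    #(edgeUnion P ∩ (transversalOf f).powersetCard 2) ≤ (#(agreementSet P f)).choose 2 := by
  have edges_subset : edgeUnion P ∩ (transversalOf f).powersetCard 2 ⊆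
      (P.biUnion transversalOf ∩ transversalOf f).powersetCard 2 := by
    intro e he
    simp only [edgeUnion, mem_inter, mem_biUnion, mem_powersetCard] at he ⊢
    obtain ⟨⟨g, hg, heg, -⟩, hef, he2⟩ := he
    exact ⟨subset_inter (heg.trans (subset_biUnion_of_mem transversalOf hg)) hef, he2⟩
  calc #(edgeUnion P ∩ (transversalOf f).powersetCard 2)
      ≤ (#(P.biUnion transversalOf ∩ transversalOf f)).choose 2 :=
        (card_le_card edges_subset).trans_eq (card_powersetCard _ _)
    _ ≤ (#(agreementSet P f)).choose 2 :=
        Nat.choose_le_choose 2 (card_transversalOf_inter_le P f)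

lemma card_edgeUnion_insert_ge (P : Finset (ι → α)) (f : ι → α) :
    #(edgeUnion P) + (Fintype.card ι).choose 2 ≤
      #(edgeUnion (insert f P)) + (#(agreementSet P f)).choose 2 := by
  have union_eq : edgeUnion (insert f P) = edgeUnion P ∪ (transversalOf f).powersetCard 2 := by
    simp only [edgeUnion, biUnion_insert, union_comm]
  calc #(edgeUnion P) + (Fintype.card ι).choose 2
      = #(edgeUnion P) + #((transversalOf f).powersetCard 2) := by
        rw [card_powersetCard, card_transversalOf]
    _ = #(edgeUnion (insert f P)) + #(edgeUnion P ∩ (transversalOf f).powersetCard 2) := by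
        rw [union_eq, card_union_add_card_inter]
    _ ≤ _ := Nat.add_le_add_left (card_edgeUnion_inter_le P f) _

lemma potential_edgeUnion_singleton (f : ι → α) :
    potential (edgeUnion {f}) = (2 : ℝ) ^ (-((Fintype.card ι).choose 2 : ℝ)) := by
  rw [potential, edgeUnion, singleton_biUnion, card_powersetCard, card_transversalOf]

lemma potential_edgeUnion_insert_le (P : Finset (ι → α)) (f : ι → α) :
    potential (edgeUnion (insert f P)) ≤
      potential (edgeUnion P) * ((2 : ℝ) ^ (-((Fintype.card ι).choose 2 : ℝ)) *
        2 ^ (#(agreementSet P f)).choose 2) := by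
  simp only [potential]
  rw [← Real.rpow_natCast, ← Real.rpow_add two_pos, ← Real.rpow_add two_pos]
  refine Real.rpow_le_rpow_of_exponent_le one_le_two ?_
  have card_ge : (#(edgeUnion P) + (Fintype.card ι).choose 2 : ℝ) ≤
      #(edgeUnion (insert f P)) + (#(agreementSet P f)).choose 2 := by
    exact_mod_cast card_edgeUnion_insert_ge P f
  linarith

lemma nine_mul_add_one_sq_le (p : ℕ) : 9 * (p + 1) ^ 2 ≤ 2 ^ (p + 5) := by
  induction p with
  | zero => norm_num
  | succ p ih =>
    obtain hp | hp := lt_or_ge p 2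
    · interval_cases p <;> norm_num
    · rw [show p + 1 + 5 = (p + 5) + 1 by ring, pow_succ 2]
      nlinarith

lemma two_mul_choose_add_three (n : ℕ) : 2 * (n + 3).choose 2 = n * (n + 5) + 6 := by
  have : (n + 3) * (n + 2) = (n + 3).choose 2 * 2 := by
    simpa using Nat.add_one_mul_choose_eq (n + 2) 1
  linarith

lemma choose_mul_three_pow_mul_two_pow_le {N n s : ℕ} (hn : n ≤ N) (hs : 2 ^ (N + 10) ≤ s ^ 2) :
    N.choose n * 3 ^ n * 2 ^ (n + 3).choose 2 ≤ 8 * s ^ n := by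
  obtain ⟨p, rfl⟩ := Nat.exists_eq_add_of_le' hn
  -- Squaring avoids the half-integral power of 2 that bounds `s` from below.
  refine (Nat.pow_le_pow_iff_left two_ne_zero).1 ?_
  calc ((p + n).choose n * 3 ^ n * 2 ^ (n + 3).choose 2) ^ 2
      = ((p + n).choose n) ^ 2 * 9 ^ n * 2 ^ (n * (n + 5) + 6) := by
        rw [← two_mul_choose_add_three, mul_pow, mul_pow, ← pow_mul', ← pow_mul', pow_mul 3]
        norm_num
    _ ≤ ((p + 1) ^ n) ^ 2 * 9 ^ n * 2 ^ (n * (n + 5) + 6) := by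
        gcongr
        exact Nat.choose_add_le_add_one_pow p n
    _ = 64 * (9 * (p + 1) ^ 2 * 2 ^ (n + 5)) ^ n := by
        rw [mul_pow, mul_pow, ← pow_mul, ← pow_mul, ← pow_mul]
        ring
    _ ≤ 64 * (2 ^ (p + 5) * 2 ^ (n + 5)) ^ n := by
        gcongr
        exact nine_mul_add_one_sq_le p
    _ = 64 * (2 ^ (p + n + 10)) ^ n := by ring
    _ ≤ 64 * (s ^ 2) ^ n := by gcongr
    _ = (8 * s ^ n) ^ 2 := by ring

section FiniteClasses

variable [Fintype α]

lemma card_filter_subset_agreementSet_le (P : Finset (ι → α)) {A N : Finset ι}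
    (hAN : Disjoint A N) (g : ι → α) :
    #{f ∈ agreeingOn A g | N ⊆ agreementSet P f} ≤
      #P ^ #N * Fintype.card α ^ (#Aᶜ - #N) := by
  let allowed (i : ι) : Finset α :=
    if i ∈ A then {g i} else if i ∈ N then P.image (· i) else univ
  have subset_pi : {f ∈ agreeingOn A g | N ⊆ agreementSet P f} ⊆ Fintype.piFinset allowed := by
    intro f hf
    simp only [agreeingOn, mem_filter, mem_univ, true_and] at hf
    obtain ⟨f_eq_g, N_subset⟩ := hf
    refine Fintype.mem_piFinset.2 fun i => ?_
    by_cases hiA : i ∈ A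
    · simp only [allowed, if_pos hiA, mem_singleton, f_eq_g i hiA]
    by_cases hiN : i ∈ N
    · obtain ⟨b, hb, hfb⟩ := (mem_filter.1 (N_subset hiN)).2
      simp only [allowed, if_neg hiA, if_pos hiN]
      exact mem_image.2 ⟨b, hb, hfb.symm⟩
    · simp only [allowed, if_neg hiA, if_neg hiN, mem_univ]
  have N_subset_compl : N ⊆ Aᶜ := subset_compl_iff_disjoint_left.2 hAN
  calc #{f ∈ agreeingOn A g | N ⊆ agreementSet P f}
      ≤ ∏ i, #(allowed i) := (card_le_card subset_pi).trans_eq (Fintype.card_piFinset _)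
    _ = ∏ i ∈ Aᶜ, #(allowed i) := by
        refine (prod_subset (subset_univ _) fun i _ hi => ?_).symm
        simp only [allowed, if_pos (by simpa using hi : i ∈ A), card_singleton]
    _ ≤ ∏ i ∈ Aᶜ, if i ∈ N then #P else Fintype.card α := by
        refine prod_le_prod' fun i hi => ?_
        simp only [allowed, if_neg (mem_compl.1 hi)]
        split_ifs
        exacts [card_image_le, le_rfl]
    _ = #P ^ #N * Fintype.card α ^ (#Aᶜ - #N) := by
        rw [prod_ite, prod_const, prod_const, filter_mem_eq_inter,
          inter_eq_right.2 N_subset_compl, filter_notMem_eq_sdiff,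
          card_sdiff_of_subset N_subset_compl]

lemma sum_comp_card_agreementSet_le (P : Finset (ι → α)) (A : Finset ι) (g : ι → α)
    {w : ℕ → ℕ} (hw : Monotone w) :
    ∑ f ∈ agreeingOn A g, w #(agreementSet P f) ≤
      ∑ n ∈ range (#Aᶜ + 1),
        (#Aᶜ).choose n * (#P ^ n * Fintype.card α ^ (#Aᶜ - n) * w (n + #A)) := by
  have sdiff_mem (f) (_ : f ∈ agreeingOn A g) : agreementSet P f \ A ∈ Aᶜ.powerset :=
    mem_powerset.2 <| (sdiff_eq_inter_compl _ A).trans_subset inter_subset_right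
  have fiber_le (N) (hN : N ∈ Aᶜ.powerset) :
      ∑ f ∈ agreeingOn A g with agreementSet P f \ A = N, w #(agreementSet P f) ≤
        #P ^ #N * Fintype.card α ^ (#Aᶜ - #N) * w (#N + #A) := by
    have disjoint_N : Disjoint A N := subset_compl_iff_disjoint_left.1 (mem_powerset.1 hN)
    calc ∑ f ∈ agreeingOn A g with agreementSet P f \ A = N, w #(agreementSet P f)
        ≤ ∑ f ∈ agreeingOn A g with agreementSet P f \ A = N, w (#N + #A) := by
          refine sum_le_sum fun f hf => hw ?_
          rw [← (mem_filter.1 hf).2]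
          exact card_le_card_sdiff_add_card
      _ = #{f ∈ agreeingOn A g | agreementSet P f \ A = N} * w (#N + #A) := by
          rw [sum_const, smul_eq_mul]
      _ ≤ #{f ∈ agreeingOn A g | N ⊆ agreementSet P f} * w (#N + #A) := by
          gcongr
          rintro rfl
          exact sdiff_subset
      _ ≤ _ := Nat.mul_le_mul_right _ (card_filter_subset_agreementSet_le P disjoint_N g)
  calc ∑ f ∈ agreeingOn A g, w #(agreementSet P f)
      = ∑ N ∈ Aᶜ.powerset, ∑ f ∈ agreeingOn A g with agreementSet P f \ A = N,
          w #(agreementSet P f) := (sum_fiberwise_of_maps_to sdiff_mem _).symm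
    _ ≤ ∑ N ∈ Aᶜ.powerset, #P ^ #N * Fintype.card α ^ (#Aᶜ - #N) * w (#N + #A) :=
        sum_le_sum fiber_le
    _ = _ := by
        simpa only [smul_eq_mul] using
          sum_powerset_apply_card (fun n => #P ^ n * Fintype.card α ^ (#Aᶜ - n) * w (n + #A))

lemma sum_two_pow_choose_agreementSet_le {P : Finset (ι → α)} (hP : #P ≤ 3) {A : Finset ι}
    (hA : #A = 3) (hα : 2 ^ (Fintype.card ι + 7) ≤ Fintype.card α ^ 2) (g : ι → α) :
    ∑ f ∈ agreeingOn A g, 2 ^ (#(agreementSet P f)).choose 2 ≤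
      8 * Fintype.card ι * Fintype.card α ^ (Fintype.card ι - 3) := by
  set N := Fintype.card ι - 3
  have card_eq : Fintype.card ι = N + 3 := by have := card_le_univ A; omega
  have card_compl_A : #Aᶜ = N := by rw [card_compl, hA]
  have weight_mono : Monotone fun a : ℕ => 2 ^ a.choose 2 :=
    (pow_right_mono₀ one_le_two).comp (Nat.choose_mono 2)
  have term_le (n) (hn : n ∈ range (N + 1)) :
      N.choose n * (#P ^ n * Fintype.card α ^ (N - n) * 2 ^ (n + 3).choose 2) ≤
        8 * Fintype.card α ^ N := by
    have hnN : n ≤ N := Nat.lt_succ_iff.1 (mem_range.1 hn)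
    calc N.choose n * (#P ^ n * Fintype.card α ^ (N - n) * 2 ^ (n + 3).choose 2)
        ≤ N.choose n * (3 ^ n * Fintype.card α ^ (N - n) * 2 ^ (n + 3).choose 2) := by gcongr
      _ = N.choose n * 3 ^ n * 2 ^ (n + 3).choose 2 * Fintype.card α ^ (N - n) := by ring
      _ ≤ 8 * Fintype.card α ^ n * Fintype.card α ^ (N - n) := by
          gcongr ?_ * _
          exact choose_mul_three_pow_mul_two_pow_le hnN (by simpa only [card_eq] using hα)
      _ = 8 * Fintype.card α ^ N := by rw [mul_assoc, ← pow_add, Nat.add_sub_cancel' hnN]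
  have sum_le := sum_comp_card_agreementSet_le P A g weight_mono
  rw [card_compl_A, hA] at sum_le
  calc ∑ f ∈ agreeingOn A g, 2 ^ (#(agreementSet P f)).choose 2
      ≤ ∑ n ∈ range (N + 1), 8 * Fintype.card α ^ N := sum_le.trans (sum_le_sum term_le)
    _ = (N + 1) * (8 * Fintype.card α ^ N) := by rw [sum_const, card_range, smul_eq_mul]
    _ ≤ (N + 3) * (8 * Fintype.card α ^ N) := by gcongr; norm_num
    _ = _ := by rw [card_eq]; ring

variable (ι α) in
/-- The bound on the factor by which the total potential grows when a set of at most three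
transversals is extended by one transversal that is prescribed on three classes. -/
noncomputable def extensionFactor : ℝ :=
  (2 : ℝ) ^ (-((Fintype.card ι).choose 2 : ℝ)) *
    (8 * Fintype.card ι * Fintype.card α ^ (Fintype.card ι - 3))

lemma sum_potential_edgeUnion_insert_le {P : Finset (ι → α)} (hP : #P ≤ 3) {A : Finset ι}
    (hA : #A = 3) (hα : 2 ^ (Fintype.card ι + 7) ≤ Fintype.card α ^ 2) (g : ι → α) :
    ∑ f ∈ agreeingOn A g, potential (edgeUnion (insert f P)) ≤
      potential (edgeUnion P) * extensionFactor ι α := by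
  refine (sum_le_sum fun f _ => potential_edgeUnion_insert_le P f).trans ?_
  rw [← mul_sum, ← mul_sum, extensionFactor]
  gcongr
  · exact potential_nonneg _
  · exact_mod_cast sum_two_pow_choose_agreementSet_le hP hA hα g

lemma sum_insert_three_le {β : Type*} [DecidableEq β] {φ : Finset β → ℝ} {T : Finset β} {c : ℝ}
    (hc : 0 ≤ c) (step : ∀ P : Finset β, #P ≤ 3 → ∑ b ∈ T, φ (insert b P) ≤ φ P * c) (b₁ : β) :
    ∑ b₂ ∈ T, ∑ b₃ ∈ T, ∑ b₄ ∈ T, φ {b₄, b₃, b₂, b₁} ≤ φ {b₁} * c ^ 3 := by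
  calc ∑ b₂ ∈ T, ∑ b₃ ∈ T, ∑ b₄ ∈ T, φ {b₄, b₃, b₂, b₁}
      ≤ ∑ b₂ ∈ T, ∑ b₃ ∈ T, φ {b₃, b₂, b₁} * c := by
        gcongr
        exact step _ card_le_three
    _ ≤ ∑ b₂ ∈ T, φ {b₂, b₁} * c * c := by
        simp only [← sum_mul]
        gcongr ?_ * c
        rw [sum_mul]
        gcongr
        exact step _ (card_le_two.trans (by norm_num))
    _ ≤ φ {b₁} * c * c * c := by
        simp only [← sum_mul]
        gcongr
        exact step _ (by simp)
    _ = φ {b₁} * c ^ 3 := by ring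

lemma sum_potential_triples_le {A : Finset ι} (hA : #A = 3)
    (hα : 2 ^ (Fintype.card ι + 7) ≤ Fintype.card α ^ 2) (f₁ : ι → α) :
    ∑ t ∈ agreeingOn A f₁ ×ˢ agreeingOn A f₁ ×ˢ agreeingOn A f₁,
        potential (edgeUnion {t.2.2, t.2.1, t.1, f₁}) ≤
      (2 : ℝ) ^ (-((Fintype.card ι).choose 2 : ℝ)) * extensionFactor ι α ^ 3 := by
  have factor_nonneg : 0 ≤ extensionFactor ι α := by
    unfold extensionFactor
    positivity
  simp only [sum_product, ← potential_edgeUnion_singleton f₁]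
  exact sum_insert_three_le (φ := fun P => potential (edgeUnion P)) factor_nonneg
    (fun _ hP => sum_potential_edgeUnion_insert_le hP hA hα f₁) f₁

variable (ι α) in
/-- The quadruples `(f₁, f₂, f₃, f₄)` together with a set `A` of three coordinates on which they all
agree, encoded as `⟨(A, f₁), f₂, f₃, f₄⟩`. -/
def linkedQuadruples :
    Finset (Σ _ : Finset ι × (ι → α), (ι → α) × (ι → α) × (ι → α)) :=
  (powersetCard 3 univ ×ˢ univ).sigma fun p =>
    agreeingOn p.1 p.2 ×ˢ agreeingOn p.1 p.2 ×ˢ agreeingOn p.1 p.2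

lemma sum_potential_linkedQuadruples_le
    (hα : 2 ^ (Fintype.card ι + 7) ≤ Fintype.card α ^ 2) :
    ∑ q ∈ linkedQuadruples ι α,
        potential (edgeUnion {q.2.2.2, q.2.2.1, q.2.1, q.1.2}) ≤
      (Fintype.card ι).choose 3 * (Fintype.card α : ℝ) ^ Fintype.card ι *
        ((2 : ℝ) ^ (-((Fintype.card ι).choose 2 : ℝ)) * extensionFactor ι α ^ 3) := by
  rw [linkedQuadruples, sum_sigma]
  refine (sum_le_card_nsmul _ _ _ fun p hp => sum_potential_triples_le
    (mem_powersetCard_univ.1 (mem_product.1 hp).1) hα p.2).trans_eq ?_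
  rw [card_product, card_powersetCard, card_univ, card_univ, Fintype.card_fun, nsmul_eq_mul,
    Nat.cast_mul, Nat.cast_pow]

lemma mem_agreeingOn_image_fst {V : Finset (ι × α)} {f g : ι → α}
    (hf : V ⊆ transversalOf f) (hg : V ⊆ transversalOf g) :
    g ∈ agreeingOn (V.image Prod.fst) f := by
  simp only [agreeingOn, mem_filter, mem_univ, true_and, forall_mem_image]
  exact fun v hv => (mem_transversalOf.1 (hg hv)).trans (mem_transversalOf.1 (hf hv)).symm

end FiniteClasses

lemma edgeSet_inter {k s : ℕ} (S T : Finset (Fin k × Fin s)) :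
    edgeSet S ∩ edgeSet T = edgeSet (S ∩ T) := by
  ext e
  simp only [edgeSet, mem_inter, mem_powersetCard, subset_inter_iff]
  tauto

lemma exists_linkedQuadruple_of_isCluster {k s : ℕ} {F : Finset (Finset (Fin k × Fin s))}
    (hF : IsCluster F) :
    ∃ q ∈ linkedQuadruples (Fin k) (Fin s),
      edgeUnion {q.2.2.2, q.2.2.1, q.2.1, q.1.2} = F := by
  obtain ⟨S₁, S₂, S₃, S₄, h₁, h₂, h₃, h₄, -, -, -, -, -, -, two_le_card, rfl⟩ := hF
  obtain ⟨f₁, rfl⟩ := exists_eq_transversalOf h₁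
  obtain ⟨f₂, rfl⟩ := exists_eq_transversalOf h₂
  obtain ⟨f₃, rfl⟩ := exists_eq_transversalOf h₃
  obtain ⟨f₄, rfl⟩ := exists_eq_transversalOf h₄
  rw [edgeSet_inter, edgeSet_inter, edgeSet_inter, edgeSet, card_powersetCard] at two_le_card
  have three_le_card : 3 ≤ #(transversalOf f₁ ∩ transversalOf f₂ ∩ transversalOf f₃ ∩
      transversalOf f₄) := by
    by_contra! hlt
    exact absurd (two_le_card.trans (Nat.choose_le_choose 2 (Nat.le_of_lt_succ hlt)))
      (by decide)
  obtain ⟨V, hV, card_V⟩ := exists_subset_card_eq three_le_card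
  simp only [subset_inter_iff] at hV
  obtain ⟨⟨⟨hV₁, hV₂⟩, hV₃⟩, hV₄⟩ := hV
  have card_image : #(V.image Prod.fst) = 3 :=
    (card_image_of_injOn ((injOn_fst_transversalOf f₁).mono (coe_subset.2 hV₁))).trans card_V
  refine ⟨⟨(V.image Prod.fst, f₁), f₂, f₃, f₄⟩, ?_, ?_⟩
  · simp only [linkedQuadruples, mem_sigma, mem_product, mem_powersetCard_univ, mem_univ]
    exact ⟨⟨card_image, trivial⟩, mem_agreeingOn_image_fst hV₁ hV₂,
      mem_agreeingOn_image_fst hV₁ hV₃, mem_agreeingOn_image_fst hV₁ hV₄⟩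
  · simp only [edgeUnion, biUnion_insert, singleton_biUnion, edgeSet]
    ac_rfl

lemma finsum_isCluster_potential_le (k s : ℕ) :
    ∑ᶠ F ∈ {F : Finset (Finset (Fin k × Fin s)) | IsCluster F}, potential F ≤
      ∑ q ∈ linkedQuadruples (Fin k) (Fin s),
        potential (edgeUnion {q.2.2.2, q.2.2.1, q.2.1, q.1.2}) := by
  rw [finsum_mem_eq_finite_toFinset_sum _ (Set.toFinite _)]
  refine (sum_le_sum_of_subset_of_nonneg (fun F hF => ?_) fun F _ _ =>
    potential_nonneg F).trans (sum_image_le_of_nonneg fun F _ => potential_nonneg F)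
  exact mem_image.2 (exists_linkedQuadruple_of_isCluster (by simpa using hF))

end Transversals

lemma two_pow_le_sq_of_rpow_half_le {m s : ℕ} (hs : (2 : ℝ) ^ ((m : ℝ) / 2) ≤ s) :
    2 ^ m ≤ s ^ 2 := by
  have : ((2 : ℝ) ^ ((m : ℝ) / 2)) ^ 2 = 2 ^ m := by
    rw [← Real.rpow_mul_natCast zero_le_two, Nat.cast_ofNat, div_mul_cancel₀ _ two_ne_zero,
      Real.rpow_natCast]
  exact_mod_cast this ▸ pow_le_pow_left₀ (by positivity) hs 2

theorem potential_of_clusters_general {k s : ℕ} (hs : 2 ^ (k + 7) ≤ s ^ 2) :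
    ∑ᶠ F ∈ {F : Finset (Finset (Fin k × Fin s)) | IsCluster F},
        (2 : ℝ) ^ (-(F.card : ℝ))
      ≤ (k : ℝ) ^ 3 * (Nat.choose k 3 : ℝ) * (s : ℝ) ^ (4 * k - 9) *
          (2 : ℝ) ^ (-(4 * (Nat.choose k 2 : ℝ)) + 9) := by
  have sum_le := (finsum_isCluster_potential_le k s).trans
    (sum_potential_linkedQuadruples_le (by simpa only [Fintype.card_fin] using hs))
  simp only [extensionFactor, Fintype.card_fin] at sum_le
  refine sum_le.trans_eq ?_
  obtain hk | hk := lt_or_ge k 3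
  · simp [Nat.choose_eq_zero_of_lt hk]
  have pow_s : (s : ℝ) ^ (4 * k - 9) = s ^ k * (s ^ (k - 3)) ^ 3 := by
    rw [← pow_mul, ← pow_add]
    congr 1
    omega
  have pow_two : (2 : ℝ) ^ (-(4 * (k.choose 2 : ℝ)) + 9) =
      ((2 : ℝ) ^ (-(k.choose 2 : ℝ))) ^ 4 * 8 ^ 3 := by
    rw [Real.rpow_add two_pos, ← Real.rpow_mul_natCast zero_le_two]
    norm_num [mul_comm]
  rw [pow_s, pow_two]
  ring

/-- For all large enough `k` and all `s` with `s ≥ 2^{(k+9)/2}`, the total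
potential of the family of all clusters is at most
`k³ · C(k,3) · s^{4k-9} · 2^{-4C(k,2)+9}`. -/
theorem potential_of_clusters :
    ∃ K : ℕ, ∀ k : ℕ, K ≤ k → ∀ s : ℕ, (s : ℝ) ≥ (2 : ℝ) ^ (((k : ℝ) + 9) / 2) →
      ∑ᶠ F ∈ {F : Finset (Finset (Fin k × Fin s)) | IsCluster F},
          (2 : ℝ) ^ (-(F.card : ℝ))
        ≤ (k : ℝ) ^ 3 * (Nat.choose k 3 : ℝ) * (s : ℝ) ^ (4 * k - 9) *
            (2 : ℝ) ^ (-(4 * (Nat.choose k 2 : ℝ)) + 9) :=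
  ⟨0, fun k _ s hs => potential_of_clusters_general <|
    (Nat.pow_le_pow_right two_pos (by omega)).trans <|
      two_pow_le_sq_of_rpow_half_le (m := k + 9) (by exact_mod_cast hs)⟩
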